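/- arXiv:2010.00684 — 2 statements merged into one kernel-verified Lean document; each statement's English description precedes it below -/
import Mathlib

section
/- Let $V$ be a finite type and $r : V \to V \to \mathrm{Prop}$ a directed graph that is acyclic, i.e., no vertex $v$ satisfies $\mathrm{TransGen}\ r\ v\ v$ (there are no directed cycles). Suppose the edge $i \to j$ (i.e., $r\,i\,j$ holds) is covered: the parent set of $j$ equals the parent set of $i$ together with $i$, i.e., for all $k$, $r\,k\,j \leftrightarrow (r\,k\,i \lor k = i)$. Let $r'$ be the graph obtained from $r$ by reversing the edge $i \to j$: $r'\,a\,b$ holds iff ($r\,a\,b$ and not ($a = i$ and $b = j$)) or ($a = j$ and $b = i$). Then $r'$ is also acyclic. -/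
/-- Reversing a covered edge `i → j` of an acyclic directed graph yields an
acyclic directed graph. -/
theorem covered_edge_reversal_acyclic {V : Type*} [Fintype V]
    (r : V → V → Prop) (hacyc : ∀ v, ¬ Relation.TransGen r v v)
    (i j : V) (hij : r i j)
    (hcov : ∀ k, r k j ↔ (r k i ∨ k = i))
    (r' : V → V → Prop)
    (hr' : ∀ a b, r' a b ↔ ((r a b ∧ ¬ (a = i ∧ b = j)) ∨ (a = j ∧ b = i))) :
    ∀ v, ¬ Relation.TransGen r' v v := by
  have hne : i ≠ j := by
    rintro rfl
    exact hacyc _ (.single hij)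
  have hpar : ∀ b, r b j → Relation.TransGen r i b → False := by
    intro b hb hib
    rcases (hcov b).1 hb with h | rfl
    · exact hacyc _ (hib.tail h)
    · exact hacyc _ hib
  have key : ∀ a b, Relation.TransGen r' a b →
      (Relation.TransGen r a b ∧ ¬ (a = i ∧ b = j)) ∨ (a = j ∧ b = i) ∨
        (a = j ∧ Relation.TransGen r i b ∧ b ≠ j) := by
    intro a b h
    induction h with
    | single h =>
      rcases (hr' _ _).1 h with ⟨h, hn⟩ | h
      · exact Or.inl ⟨.single h, hn⟩
      · exact Or.inr (Or.inl h)
    | @tail b c _ h ih =>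
      rcases (hr' _ _).1 h with ⟨h, hn⟩ | ⟨rfl, rfl⟩
      · rcases ih with ⟨h1, _⟩ | ⟨h1, rfl⟩ | ⟨h1, h2, _⟩
        · refine Or.inl ⟨h1.tail h, ?_⟩
          rintro ⟨rfl, rfl⟩
          exact hpar b h h1
        · exact Or.inr (Or.inr ⟨h1, .single h, fun hc => hn ⟨rfl, hc⟩⟩)
        · refine Or.inr (Or.inr ⟨h1, h2.tail h, ?_⟩)
          rintro rfl
          exact hpar b h h2
      · rcases ih with ⟨h1, h2⟩ | ⟨_, h2⟩ | ⟨_, _, h2⟩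
        · refine Or.inl ⟨?_, fun hc => hne hc.2⟩
          obtain ⟨k, hak, hk⟩ := Relation.TransGen.tail'_iff.1 h1
          rcases (hcov k).1 hk with hk | rfl
          · exact Relation.TransGen.tail' hak hk
          · rcases Relation.reflTransGen_iff_eq_or_transGen.1 hak with e | e
            · exact absurd ⟨e.symm, rfl⟩ h2
            · exact e
        · exact absurd h2.symm hne
        · exact absurd rfl h2
  intro v hv
  rcases key v v hv with ⟨h, _⟩ | ⟨h1, h2⟩ | ⟨h1, _, h2⟩
  · exact hacyc v h
  · exact hne (h2.symm.trans h1)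
  · exact h2 h1
end

section
/- Let $V$ be a finite type and $r : V \to V \to \mathrm{Prop}$ (with decidable values) an acyclic directed graph containing a covered edge $i \to j$: $r\,i\,j$ holds and for all $k$, $r\,k\,j \leftrightarrow (r\,k\,i \lor k = i)$. Let $r'$ be the graph obtained by reversing the edge $i \to j$. Denote by $d(v)$ and $d'(v)$ the indegrees of $v$ in $r$ and $r'$ (the number of vertices $k$ with an edge $k \to v$). Then $d'(i) = d(j)$, $d'(j) = d(i)$, and $d'(v) = d(v)$ for all $v \notin \{i,j\}$; consequently, the multiset of node indegrees of $r'$ equals the multiset of node indegrees of $r$. -/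
/-- Reversing a covered edge `i → j` of an acyclic directed graph swaps the
indegrees of `i` and `j` and leaves all other indegrees unchanged; hence the
multiset of node indegrees is preserved. -/
theorem covered_edge_reversal_indegrees {V : Type*} [Fintype V] [DecidableEq V]
    (r : V → V → Prop) [DecidableRel r]
    (hacyc : ∀ v, ¬ Relation.TransGen r v v)
    (i j : V) (hij : r i j)
    (hcov : ∀ k, r k j ↔ (r k i ∨ k = i))
    (r' : V → V → Prop) [DecidableRel r']
    (hr' : ∀ a b, r' a b ↔ ((r a b ∧ ¬ (a = i ∧ b = j)) ∨ (a = j ∧ b = i)))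
    (d d' : V → ℕ)
    (hd : ∀ v, d v = (Finset.univ.filter (fun k => r k v)).card)
    (hd' : ∀ v, d' v = (Finset.univ.filter (fun k => r' k v)).card) :
    d' i = d j ∧ d' j = d i ∧ (∀ v, v ≠ i → v ≠ j → d' v = d v)
      ∧ Finset.univ.val.map d' = Finset.univ.val.map d := by
  have hii : ¬ r i i := fun h => hacyc i (.single h)
  have hji : ¬ r j i := fun h => hacyc i (.tail (.single hij) h)
  have hne : i ≠ j := by
    intro h
    apply hii
    rw [← h] at hij
    exact hij
  have h1 : d' i = d j := by
    rw [hd', hd]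
    have e1 : Finset.univ.filter (fun k => r' k i)
        = insert j (Finset.univ.filter (fun k => r k i)) := by
      ext k
      simp only [Finset.mem_filter, Finset.mem_univ, true_and, Finset.mem_insert, hr']
      tauto
    have e2 : Finset.univ.filter (fun k => r k j)
        = insert i (Finset.univ.filter (fun k => r k i)) := by
      ext k
      simp only [Finset.mem_filter, Finset.mem_univ, true_and, Finset.mem_insert, hcov]
      tauto
    rw [e1, e2, Finset.card_insert_of_notMem (by simpa using hji),
      Finset.card_insert_of_notMem (by simpa using hii)]
  have h2 : d' j = d i := by
    rw [hd', hd]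
    congr 1
    ext k
    simp only [Finset.mem_filter, Finset.mem_univ, true_and, hr', hcov]
    by_cases hk : k = i
    · subst hk
      simp [hii, hne.symm]
    · simp [hk, hne.symm]
  have h3 : ∀ v, v ≠ i → v ≠ j → d' v = d v := by
    intro v hi hj
    rw [hd', hd]
    congr 1
    ext k
    simp [hr', hi, hj]
  refine ⟨h1, h2, h3, ?_⟩
  have h4 : d' = d ∘ Equiv.swap i j := by
    funext v
    by_cases hi : v = i
    · subst hi
      simp [h1]
    · by_cases hj : v = j
      · subst hj
        simp [h2]
      · simp [Equiv.swap_apply_of_ne_of_ne hi hj, h3 v hi hj]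
  rw [h4, ← Multiset.map_map]
  congr 1
  exact congrArg Finset.val (Finset.map_univ_equiv (Equiv.swap i j))
end
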